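/- For every n ≥ 1, every k ≥ 1 and every partition of {1,…,n+1} into nonempty sets X, Y_1, …, Y_k, the sequence X□(Y_1|⋯|Y_k) is an ordered partition of {1,…,n}; that is, its blocks are nonempty, pairwise disjoint, and their union is {1,…,n}. -/

import Mathlib

namespace SU

/-- min of a finset of naturals (0 for the empty set). -/
def fmin (s : Finset ℕ) : ℕ := s.min.untopD 0
/-- max of a finset of naturals (0 for the empty set). -/
def fmax (s : Finset ℕ) : ℕ := s.max.unbotD 0

/-- `L` is an ordered partition of the finite set `S`. -/
def IsOrderedPartition (S : Finset ℕ) (L : List (Finset ℕ)) : Prop :=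
  (∀ B ∈ L, B ≠ ∅) ∧ List.Pairwise Disjoint L ∧ L.foldr (· ∪ ·) ∅ = S

/-- delete empty blocks. -/
def remEmpty (L : List (Finset ℕ)) : List (Finset ℕ) :=
  L.filter (fun s => decide (s ≠ ∅))

/-- `I_S(x)`: the (1-based) position of `x` in the increasing enumeration of `S`. -/
def iord (S : Finset ℕ) (x : ℕ) : ℕ := (S.filter (· ≤ x)).card

/-- `I_S⁻¹(k)`: the `k`-th smallest element of `S` (1-based). -/
def iinv (S : Finset ℕ) (k : ℕ) : ℕ := (S.sort (· ≤ ·)).getD (k - 1) 0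

/-- lower disjoint union `A ⊔̲ B` with respect to the ambient set `U`. -/
def lcup (U A B : Finset ℕ) : Finset ℕ :=
  if A = ∅ ∨ B = ∅ then A ∪ B
  else if fmin B = fmin (U \ A) then
    B.image (fun b => iord (U \ A) b + A.card - 1) ∪ Finset.Icc 1 A.card
  else B.image (fun b => iord (U \ A) b + A.card - 1)

/-- upper disjoint union `A ⊔̄ B` with respect to the ambient set `U`. -/
def ucup (U A B : Finset ℕ) : Finset ℕ :=
  if A = ∅ ∨ B = ∅ then A ∪ B
  else if fmax A = fmax (U \ B) then
    A.image (iord (U \ B)) ∪ Finset.Icc (U.card - B.card) (U.card - 1)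
  else A.image (iord (U \ B))

/-- `A □ (B_1|⋯|B_k) = (B_1|⋯|B_k) □ A`, with ambient set `U`. -/
def box (U A : Finset ℕ) (Bs : List (Finset ℕ)) : List (Finset ℕ) :=
  if fmax A = fmax U then Bs.map (fun B => ucup U B A)
  else Bs.map (fun B => lcup U A B)

/-- 2-block ordered partitions of `{1,…,n}`. -/
def IsPart2 (n : ℕ) (C D : Finset ℕ) : Prop :=
  C ≠ ∅ ∧ D ≠ ∅ ∧ Disjoint C D ∧ C ∪ D = Finset.Icc 1 n

/-- `C|D ∈ Q_{r,1}(n)`. -/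
def memQr1 (r n : ℕ) (C D : Finset ℕ) : Prop :=
  IsPart2 n C D ∧ (Finset.Icc 1 r ⊆ C ∨ Finset.Icc 1 r ⊆ D)

/-- `C|D ∈ Q_{1,s}(n)`. -/
def memQ1s (s n : ℕ) (C D : Finset ℕ) : Prop :=
  IsPart2 n C D ∧ (Finset.Icc (n - s + 1) n ⊆ C ∨ Finset.Icc (n - s + 1) n ⊆ D)

end SU
namespace SU

lemma mem_foldr_union (L : List (Finset ℕ)) (x : ℕ) :
    x ∈ L.foldr (· ∪ ·) ∅ ↔ ∃ B ∈ L, x ∈ B := by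
  induction L with
  | nil => simp
  | cons a l ih => simp only [List.foldr_cons, Finset.mem_union, ih]; simp

lemma fmin_spec (s : Finset ℕ) (hs : s.Nonempty) : fmin s ∈ s ∧ ∀ x ∈ s, fmin s ≤ x := by
  have h : fmin s = s.min' hs := by
    unfold fmin
    rw [← Finset.coe_min' hs]; rfl
  rw [h]
  exact ⟨s.min'_mem hs, fun x hx => s.min'_le x hx⟩

lemma fmax_spec (s : Finset ℕ) (hs : s.Nonempty) : fmax s ∈ s ∧ ∀ x ∈ s, x ≤ fmax s := by
  have h : fmax s = s.max' hs := by
    unfold fmax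
    rw [← Finset.coe_max' hs]; rfl
  rw [h]
  exact ⟨s.max'_mem hs, fun x hx => s.le_max' x hx⟩

/-- Abstract gluing: the image partition with an extra set attached to the block of `c`. -/
lemma glue (V E T : Finset ℕ) (f : ℕ → ℕ) (c : ℕ) (hc : c ∈ V)
    (hf : Set.InjOn f V) (hE : ∀ v ∈ V, f v ∈ E → v = c)
    (hT : V.image f ∪ E = T) (g : Finset ℕ → Finset ℕ) (L : List (Finset ℕ))
    (hg : ∀ B ∈ L, g B = if c ∈ B then B.image f ∪ E else B.image f)
    (hL : IsOrderedPartition V L) : IsOrderedPartition T (L.map g) := by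
  obtain ⟨h1, h2, h3⟩ := hL
  have hV : ∀ x, x ∈ V ↔ ∃ B ∈ L, x ∈ B := by
    intro x; rw [← h3, mem_foldr_union]
  refine ⟨?_, ?_, ?_⟩
  · intro C hC
    obtain ⟨B, hB, rfl⟩ := List.mem_map.1 hC
    obtain ⟨b, hb⟩ := Finset.nonempty_iff_ne_empty.2 (h1 B hB)
    apply Finset.nonempty_iff_ne_empty.1
    refine ⟨f b, ?_⟩
    rw [hg B hB]
    split_ifs
    · exact Finset.mem_union_left _ (Finset.mem_image_of_mem f hb)
    · exact Finset.mem_image_of_mem f hb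
  · rw [List.pairwise_map]
    refine h2.imp_of_mem ?_
    intro A B hA hB hAB
    rw [Finset.disjoint_left] at hAB ⊢
    intro x hx hx'
    have key : ∀ C ∈ L, x ∈ g C → (∃ v ∈ C, v ∈ V ∧ f v = x) ∨ (c ∈ C ∧ x ∈ E) := by
      intro C hC hxC
      rw [hg C hC] at hxC
      split_ifs at hxC with hcC
      · rcases Finset.mem_union.1 hxC with h | h
        · obtain ⟨v, hv, e⟩ := Finset.mem_image.1 h
          exact Or.inl ⟨v, hv, (hV v).2 ⟨C, hC, hv⟩, e⟩
        · exact Or.inr ⟨hcC, h⟩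
      · obtain ⟨v, hv, e⟩ := Finset.mem_image.1 hxC
        exact Or.inl ⟨v, hv, (hV v).2 ⟨C, hC, hv⟩, e⟩
    rcases key A hA hx with ⟨v, hv, hvV, e⟩ | ⟨hcA, hxE⟩ <;>
    rcases key B hB hx' with ⟨w, hw, hwV, e'⟩ | ⟨hcB, hxE'⟩
    · have : v = w := hf hvV hwV (e.trans e'.symm)
      exact hAB hv (this ▸ hw)
    · have : v = c := hE v hvV (e ▸ hxE')
      exact hAB hv (this ▸ hcB)
    · have : w = c := hE w hwV (e' ▸ hxE)
      exact hAB hcA (this ▸ hw)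
    · exact hAB hcA hcB
  · ext x
    rw [mem_foldr_union, ← hT, Finset.mem_union, Finset.mem_image]
    constructor
    · rintro ⟨C, hC, hx⟩
      obtain ⟨B, hB, rfl⟩ := List.mem_map.1 hC
      rw [hg B hB] at hx
      have aux : x ∈ B.image f → ∃ a ∈ V, f a = x := by
        intro h
        obtain ⟨v, hv, e⟩ := Finset.mem_image.1 h
        exact ⟨v, (hV v).2 ⟨B, hB, hv⟩, e⟩
      split_ifs at hx
      · rcases Finset.mem_union.1 hx with h | h
        · exact Or.inl (aux h)
        · exact Or.inr h
      · exact Or.inl (aux hx)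
    · rintro (⟨v, hv, rfl⟩ | hx)
      · obtain ⟨B, hB, hvB⟩ := (hV v).1 hv
        refine ⟨g B, List.mem_map_of_mem hB, ?_⟩
        rw [hg B hB]
        split_ifs
        · exact Finset.mem_union_left _ (Finset.mem_image_of_mem f hvB)
        · exact Finset.mem_image_of_mem f hvB
      · obtain ⟨B, hB, hvB⟩ := (hV c).1 hc
        refine ⟨g B, List.mem_map_of_mem hB, ?_⟩
        rw [hg B hB, if_pos hvB]
        exact Finset.mem_union_right _ hx

lemma iord_lt (V : Finset ℕ) {a b : ℕ} (hb : b ∈ V) (h : a < b) : iord V a < iord V b := by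
  unfold iord
  apply Finset.card_lt_card
  rw [Finset.ssubset_iff_of_subset]
  · exact ⟨b, by simp [hb], by simp [h]⟩
  · intro x
    simp only [Finset.mem_filter]
    rintro ⟨h1, h2⟩
    exact ⟨h1, by omega⟩

lemma iord_injOn (V : Finset ℕ) : Set.InjOn (iord V) V := by
  intro a ha b hb h
  rcases lt_trichotomy a b with h' | h' | h'
  · have := iord_lt V hb h'; omega
  · exact h'
  · have := iord_lt V ha h'; omega

lemma iord_image (V : Finset ℕ) : V.image (iord V) = Finset.Icc 1 V.card := by
  apply Finset.eq_of_subset_of_card_le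
  · intro x hx
    obtain ⟨v, hv, rfl⟩ := Finset.mem_image.1 hx
    rw [Finset.mem_Icc]
    refine ⟨?_, Finset.card_le_card (Finset.filter_subset _ _)⟩
    exact Finset.card_pos.2 ⟨v, by simp [hv]⟩
  · rw [Finset.card_image_of_injOn (iord_injOn V)]; simp

lemma iord_mem (V : Finset ℕ) {v : ℕ} (hv : v ∈ V) : 1 ≤ iord V v ∧ iord V v ≤ V.card := by
  rw [← Finset.mem_Icc, ← iord_image]
  exact Finset.mem_image_of_mem _ hv

/-- For every partition of `{1,…,n+1}` into nonempty sets
`X, Y_1, …, Y_k`, the sequence `X □ (Y_1|⋯|Y_k)` is an ordered partition of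
`{1,…,n}`. -/
theorem statement17 (n k : ℕ) (hn : 1 ≤ n) (hk : 1 ≤ k)
    (X : Finset ℕ) (Ys : List (Finset ℕ)) (hlen : Ys.length = k)
    (hpart : IsOrderedPartition (Finset.Icc 1 (n+1)) (X :: Ys)) :
    IsOrderedPartition (Finset.Icc 1 n) (box (Finset.Icc 1 (n+1)) X Ys) := by
  obtain ⟨h1, h2, h3⟩ := hpart
  have hX0 : X ≠ ∅ := h1 X (by simp)
  rw [List.pairwise_cons] at h2
  set U := Finset.Icc 1 (n+1) with hU
  have hUc : U.card = n + 1 := by simp [hU]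
  have hXU : X ⊆ U := by
    intro x hx; rw [← h3, mem_foldr_union]; exact ⟨X, by simp, hx⟩
  have hL : IsOrderedPartition (U \ X) Ys := by
    refine ⟨fun B hB => h1 B (by simp [hB]), h2.2, ?_⟩
    ext x
    rw [Finset.mem_sdiff, ← h3, mem_foldr_union, mem_foldr_union]
    constructor
    · rintro ⟨B, hB, hx⟩
      exact ⟨⟨B, by simp [hB], hx⟩, fun h => Finset.disjoint_left.1 (h2.1 B hB) h hx⟩
    · rintro ⟨⟨B, hB, hx⟩, hxX⟩
      rcases List.mem_cons.1 hB with rfl | hB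
      · exact absurd hx hxX
      · exact ⟨B, hB, hx⟩
  set V := U \ X with hVdef
  have hcard : V.card + X.card = n + 1 := by
    rw [← hUc]; exact Finset.card_sdiff_add_card_eq_card hXU
  have hXc : 1 ≤ X.card := Finset.card_pos.2 (Finset.nonempty_iff_ne_empty.2 hX0)
  have hBV : ∀ B ∈ Ys, B ⊆ V := by
    intro B hB x hx
    rw [← hL.2.2, mem_foldr_union]; exact ⟨B, hB, hx⟩
  have hVne : V.Nonempty := by
    obtain ⟨B, hB⟩ := List.exists_mem_of_length_pos (l := Ys) (by omega)
    exact (Finset.nonempty_iff_ne_empty.2 (hL.1 B hB)).mono (hBV B hB)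
  have hVc : 1 ≤ V.card := Finset.card_pos.2 hVne
  unfold box
  split_ifs with hmax
  · obtain ⟨hc, hcmax⟩ := fmax_spec V hVne
    have hfc : iord V (fmax V) = V.card := by
      unfold iord; rw [Finset.filter_true_of_mem hcmax]
    refine glue V (Finset.Icc (U.card - X.card) (U.card - 1)) _ (iord V) (fmax V) hc
      (iord_injOn V) ?_ ?_ _ Ys ?_ hL
    · intro v hv hvE
      rw [Finset.mem_Icc] at hvE
      have := iord_mem V hv
      exact iord_injOn V hv hc (by omega)
    · rw [iord_image]
      ext x
      simp only [Finset.mem_union, Finset.mem_Icc]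
      omega
    · intro B hB
      have hB0 := hL.1 B hB
      have hs := fmax_spec B (Finset.nonempty_iff_ne_empty.2 hB0)
      have hiff : fmax B = fmax V ↔ fmax V ∈ B := by
        constructor
        · intro h; rw [← h]; exact hs.1
        · intro h
          exact le_antisymm (hcmax _ (hBV B hB hs.1)) (hs.2 _ h)
      simp only [ucup, hB0, hX0, or_self, if_false, ← hVdef, hiff]
  · obtain ⟨hc, hcmin⟩ := fmin_spec V hVne
    have hfc : iord V (fmin V) = 1 := by
      unfold iord
      rw [Finset.card_eq_one]
      refine ⟨fmin V, ?_⟩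
      ext x
      simp only [Finset.mem_filter, Finset.mem_singleton]
      constructor
      · rintro ⟨hx, hx'⟩
        exact le_antisymm hx' (hcmin x hx)
      · rintro rfl
        exact ⟨hc, le_rfl⟩
    refine glue V (Finset.Icc 1 X.card) _ (fun b => iord V b + X.card - 1) (fmin V) hc
      ?_ ?_ ?_ _ Ys ?_ hL
    · intro a ha b hb h
      simp only at h
      exact iord_injOn V ha hb (by omega)
    · intro v hv hvE
      simp only [Finset.mem_Icc] at hvE
      have := iord_mem V hv
      exact iord_injOn V hv hc (by omega)
    · have : V.image (fun b => iord V b + X.card - 1)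
          = (V.image (iord V)).image (fun i => i + X.card - 1) := by
        rw [Finset.image_image]; rfl
      rw [this, iord_image]
      ext x
      simp only [Finset.mem_union, Finset.mem_Icc, Finset.mem_image]
      constructor
      · rintro (⟨a, ha, rfl⟩ | h) <;> omega
      · intro h
        by_cases hx : x ≤ X.card
        · right; omega
        · left; exact ⟨x + 1 - X.card, by omega, by omega⟩
    · intro B hB
      have hB0 := hL.1 B hB
      have hs := fmin_spec B (Finset.nonempty_iff_ne_empty.2 hB0)
      have hiff : fmin B = fmin V ↔ fmin V ∈ B := by
        constructor
        · intro h; rw [← h]; exact hs.1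
        · intro h
          exact le_antisymm (hs.2 _ h) (hcmin _ (hBV B hB hs.1))
      simp only [lcup, hB0, hX0, or_self, if_false, ← hVdef, hiff]

end SU
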